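/- Let ℓ : (0,∞) → (0,∞) be slowly varying at ∞ (i.e., for every c > 0, ℓ(ct)/ℓ(t) → 1 as t → ∞), let 0 < α < 1, and let ν̃ be a Borel measure on (0,1] with ν̃([x,1]) finite for every x > 0 and ν̃([x,1]) x^α / ℓ(1/x) → 1 as x ↓ 0. Let m ≥ 1 be an integer, c > 0, and let h : (0,∞) → [0,∞) be a nondecreasing function with h(ρ) / (ρ^α ℓ(ρ))^{m−1} → c as ρ → ∞. Then ∫₀¹ (1 − e^{−ρx}) h(ρ(1−x)) ν̃(dx) / (ρ^α ℓ(ρ))^m → Γ(1−α) c as ρ → ∞, where Γ is the Gamma function. -/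

import Mathlib

open Filter MeasureTheory Real

/-!
Let `V(s) = ν̃[1/s, 1]`, which is nondecreasing and regularly varying of index `α`. The layer-cake
formula turns `Φ(ρ) = ∫ (1 - e^{-ρx}) ν̃(dx)` into `∫₀^∞ V(ρ/u) e^{-u} du`. Divided by `V(ρ)`, the
integrand tends to `u^{-α} e^{-u}`, and Potter's bound dominates it, so `Φ(ρ) / V(ρ) → Γ(1-α)`.

Almost all the mass of `Φ` comes from `x` near `0`: the part `x ≥ δ` contributes at most `V(1/δ)`,
a constant, whereas `V(ρ) → ∞`. Monotonicity of `h` therefore squeezes the integral between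
`h((1-δ)ρ) (Φ(ρ) - V(1/δ))` and `h(ρ) Φ(ρ)`. Regular variation of `h` makes the two bounds
asymptotically equal as `δ → 0`.
-/

open Set
open scoped Topology ENNReal

/-- Karamata's notion of regular variation of `f` at `∞` with index `a`; index `0` is slow
variation. Measurability of `f` is not part of the definition: below, monotonicity takes its
place. -/
structure IsRegularlyVarying (f : ℝ → ℝ) (a : ℝ) : Prop where
  eventually_pos : ∀ᶠ t in atTop, 0 < f t
  tendsto_div : ∀ c, 0 < c → Tendsto (fun t ↦ f (c * t) / f t) atTop (𝓝 (c ^ a))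

theorem isRegularlyVarying_rpow (a : ℝ) : IsRegularlyVarying (fun t ↦ t ^ a) a where
  eventually_pos := (eventually_gt_atTop 0).mono fun _ ht ↦ rpow_pos_of_pos ht a
  tendsto_div c hc := by
    refine tendsto_const_nhds.congr' ?_
    filter_upwards [eventually_gt_atTop 0] with t ht
    rw [mul_rpow hc.le ht.le, mul_div_cancel_right₀ _ (rpow_pos_of_pos ht a).ne']

namespace IsRegularlyVarying

variable {f g : ℝ → ℝ} {a b : ℝ}

theorem mul (hf : IsRegularlyVarying f a) (hg : IsRegularlyVarying g b) :
    IsRegularlyVarying (fun t ↦ f t * g t) (a + b) where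
  eventually_pos := by
    filter_upwards [hf.eventually_pos, hg.eventually_pos] with t using mul_pos
  tendsto_div c hc := by
    simpa only [rpow_add hc, mul_div_mul_comm] using (hf.tendsto_div c hc).mul (hg.tendsto_div c hc)

theorem pow (hf : IsRegularlyVarying f a) (n : ℕ) :
    IsRegularlyVarying (fun t ↦ f t ^ n) (a * n) where
  eventually_pos := hf.eventually_pos.mono fun _ ht ↦ pow_pos ht n
  tendsto_div c hc := by
    simpa only [rpow_mul_natCast hc.le, div_pow] using (hf.tendsto_div c hc).pow n

theorem of_tendsto_div (hg : IsRegularlyVarying g a) {l : ℝ} (hl : 0 < l)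
    (hfg : Tendsto (fun t ↦ f t / g t) atTop (𝓝 l)) : IsRegularlyVarying f a where
  eventually_pos := by
    filter_upwards [hfg.eventually_const_lt hl, hg.eventually_pos] with t hft hgt
    exact (div_pos_iff_of_pos_right hgt).1 hft
  tendsto_div c hc := by
    have hct : Tendsto (c * ·) atTop atTop := tendsto_id.const_mul_atTop hc
    have hlim := ((hfg.comp hct).div hfg hl.ne').mul (hg.tendsto_div c hc)
    rw [div_self hl.ne', one_mul] at hlim
    refine hlim.congr' ?_
    filter_upwards [hg.eventually_pos, hct.eventually hg.eventually_pos] with t hgt hgct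
    simp only [Pi.div_apply, Function.comp_apply]
    field_simp

theorem congr' (hg : IsRegularlyVarying g a) (hfg : f =ᶠ[atTop] g) : IsRegularlyVarying f a := by
  refine hg.of_tendsto_div one_pos (tendsto_const_nhds.congr' ?_)
  filter_upwards [hfg, hg.eventually_pos] with t hfgt hgt
  rw [hfgt, div_self hgt.ne']

theorem tendsto_atTop (hf : IsRegularlyVarying f a) (ha : 0 < a) (hmono : MonotoneOn f (Ioi 0)) :
    Tendsto f atTop atTop := by
  have hmono_exp : Monotone fun x ↦ f (exp x) := fun x y hxy ↦
    hmono (exp_pos x) (exp_pos y) (exp_le_exp.2 hxy)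
  rw [← tendsto_comp_exp_atTop]
  refine (tendsto_atTop_of_monotone hmono_exp).resolve_right ?_
  rintro ⟨l, hl⟩
  have hl_pos : 0 < l := by
    obtain ⟨x, hx⟩ := (tendsto_exp_atTop.eventually hf.eventually_pos).exists
    exact hx.trans_le (hmono_exp.ge_of_tendsto hl x)
  rw [tendsto_comp_exp_atTop] at hl
  have hratio : Tendsto (fun t ↦ f (2 * t) / f t) atTop (𝓝 1) := by
    rw [← div_self hl_pos.ne']
    exact (hl.comp (tendsto_id.const_mul_atTop two_pos)).div hl hl_pos.ne'
  exact (one_lt_rpow one_lt_two ha).ne (tendsto_nhds_unique hratio (hf.tendsto_div 2 two_pos))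

/-- Potter's upper bound. -/
theorem eventually_forall_mul_le (hf : IsRegularlyVarying f a) (hmono : MonotoneOn f (Ioi 0))
    (hb : 0 ≤ b) (hab : a < b) :
    ∀ᶠ s in atTop, ∀ t, 1 ≤ t → f (t * s) ≤ 2 ^ b * t ^ b * f s := by
  have hdouble : ∀ᶠ s in atTop, f (2 * s) ≤ 2 ^ b * f s := by
    filter_upwards [hf.eventually_pos, (hf.tendsto_div 2 two_pos).eventually_le_const
      (rpow_lt_rpow_of_exponent_lt one_lt_two hab)] with s hs hle
    exact (div_le_iff₀ hs).1 hle
  filter_upwards [eventually_forall_ge_atTop.2 hdouble, hf.eventually_pos, eventually_gt_atTop 0]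
    with s hs hfs hs0 t ht
  obtain ⟨n, hnt, htn⟩ := exists_nat_pow_near ht one_lt_two
  calc f (t * s) ≤ f (2 ^ (n + 1) * s) :=
        hmono (mul_pos (one_pos.trans_le ht) hs0) (mul_pos (by positivity) hs0) (by gcongr)
    _ ≤ (2 ^ b) ^ (n + 1) * f (2 ^ 0 * s) := by
        refine le_geom (u := fun k ↦ f (2 ^ k * s)) (by positivity) (n + 1) fun k _ ↦ ?_
        rw [pow_succ', mul_assoc]
        exact hs _ (le_mul_of_one_le_left hs0.le (one_le_pow₀ one_le_two))
    _ = 2 ^ b * (2 ^ n) ^ b * f s := by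
        rw [pow_zero, one_mul, pow_succ', rpow_pow_comm zero_le_two]
    _ ≤ 2 ^ b * t ^ b * f s := by gcongr

theorem eventually_forall_comp_div_le (hf : IsRegularlyVarying f a) (hmono : MonotoneOn f (Ioi 0))
    (hb : 0 ≤ b) (hab : a < b) :
    ∀ᶠ s in atTop, ∀ u, 0 < u → f (s / u) ≤ (1 + 2 ^ b * u ^ (-b)) * f s := by
  filter_upwards [hf.eventually_forall_mul_le hmono hb hab, hf.eventually_pos,
    eventually_gt_atTop 0] with s hpotter hfs hs u hu
  rcases le_total 1 u with h1u | hu1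
  · have hle : f (s / u) ≤ f s := hmono (div_pos hs hu) hs (div_le_self hs.le h1u)
    exact hle.trans (le_mul_of_one_le_left hfs.le (le_add_of_nonneg_right (by positivity)))
  · have hle := hpotter u⁻¹ ((one_le_inv₀ hu).2 hu1)
    rw [inv_mul_eq_div, inv_rpow hu.le, ← rpow_neg hu.le] at hle
    exact hle.trans (by gcongr; simp)

end IsRegularlyVarying

theorem aemeasurable_comp_const_div_of_monotoneOn {f : ℝ → ℝ} (hmono : MonotoneOn f (Ioi 0))
    {s : ℝ} (hs : 0 < s) :
    AEMeasurable (fun u ↦ f (s / u)) (volume.restrict (Ioi 0)) := by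
  refine aemeasurable_restrict_of_antitoneOn measurableSet_Ioi fun u hu v hv huv ↦ ?_
  exact hmono (div_pos hs hv) (div_pos hs hu) (div_le_div_of_nonneg_left hs.le hu huv)

section Convolution

variable {f k : ℝ → ℝ} {a b : ℝ}

theorem IsRegularlyVarying.eventually_forall_norm_comp_div_mul_le (hf : IsRegularlyVarying f a)
    (hmono : MonotoneOn f (Ioi 0)) (hnonneg : ∀ s, 0 < s → 0 ≤ f s) (hb : 0 ≤ b) (hab : a < b) :
    ∀ᶠ s in atTop, ∀ u, 0 < u →
      ‖f (s / u) * k u‖ ≤ f s * (‖k u‖ + 2 ^ b * ‖u ^ (-b) * k u‖) := by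
  filter_upwards [hf.eventually_forall_comp_div_le hmono hb hab, eventually_gt_atTop 0]
    with s hle hs u hu
  rw [norm_mul, norm_mul, norm_of_nonneg (hnonneg _ (div_pos hs hu)),
    norm_of_nonneg (rpow_nonneg hu.le _)]
  calc f (s / u) * ‖k u‖ ≤ (1 + 2 ^ b * u ^ (-b)) * f s * ‖k u‖ := by gcongr; exact hle u hu
    _ = f s * (‖k u‖ + 2 ^ b * (u ^ (-b) * ‖k u‖)) := by ring

variable (hf : IsRegularlyVarying f a) (hmono : MonotoneOn f (Ioi 0))
  (hnonneg : ∀ s, 0 < s → 0 ≤ f s) (hb : 0 ≤ b) (hab : a < b) (hk : IntegrableOn k (Ioi 0))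
  (hkb : IntegrableOn (fun u ↦ u ^ (-b) * k u) (Ioi 0))
include hf hmono hnonneg hb hab hk hkb

theorem IsRegularlyVarying.eventually_integrableOn_comp_div_mul :
    ∀ᶠ s in atTop, IntegrableOn (fun u ↦ f (s / u) * k u) (Ioi 0) := by
  filter_upwards [hf.eventually_forall_norm_comp_div_mul_le (k := k) hmono hnonneg hb hab,
    eventually_gt_atTop 0] with s hle hs
  refine ((hk.norm.add (hkb.norm.const_mul (2 ^ b))).const_mul (f s)).mono'
    ((aemeasurable_comp_const_div_of_monotoneOn hmono hs).aestronglyMeasurable.mul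
      hk.aestronglyMeasurable) ?_
  exact (ae_restrict_mem measurableSet_Ioi).mono hle

theorem IsRegularlyVarying.tendsto_integral_comp_div_mul_div :
    Tendsto (fun s ↦ (∫ u in Ioi 0, f (s / u) * k u) / f s) atTop
      (𝓝 (∫ u in Ioi 0, u ^ (-a) * k u)) := by
  simp_rw [← integral_div]
  refine tendsto_integral_filter_of_dominated_convergence
    (fun u ↦ ‖k u‖ + 2 ^ b * ‖u ^ (-b) * k u‖) ?_ ?_ (hk.norm.add (hkb.norm.const_mul _)) ?_
  · filter_upwards [hf.eventually_integrableOn_comp_div_mul hmono hnonneg hb hab hk hkb] with s hs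
    exact (hs.div_const (f s)).aestronglyMeasurable
  · filter_upwards [hf.eventually_forall_norm_comp_div_mul_le (k := k) hmono hnonneg hb hab,
      hf.eventually_pos] with s hle hfs
    filter_upwards [ae_restrict_mem measurableSet_Ioi] with u hu
    rw [norm_div, norm_of_nonneg hfs.le, div_le_iff₀' hfs]
    exact hle u hu
  · filter_upwards [ae_restrict_mem measurableSet_Ioi] with u (hu : 0 < u)
    have hlim := (hf.tendsto_div u⁻¹ (inv_pos.2 hu)).mul_const (k u)
    rw [inv_rpow hu.le, ← rpow_neg hu.le] at hlim
    simpa only [inv_mul_eq_div, mul_div_right_comm] using hlim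

end Convolution

/-- The tail `μ [1/s, ∞)` of a measure on the positive half-line, as a function of the reciprocal
`s` of the cut-off: regular variation of the tail at `0` becomes regular variation at `∞`. -/
noncomputable def reciprocalTail (μ : Measure ℝ) (s : ℝ) : ℝ := μ.real (Ici s⁻¹)

/-- The Laplace exponent `∫ (1 - e^{-ρx}) μ(dx)` of the driftless subordinator with Lévy measure
`μ`. -/
noncomputable def laplaceExponent (μ : Measure ℝ) (ρ : ℝ) : ℝ := ∫ x, (1 - exp (-(ρ * x))) ∂μ

section LaplaceExponent

variable {μ : Measure ℝ} {ρ : ℝ}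

theorem reciprocalTail_nonneg (s : ℝ) : 0 ≤ reciprocalTail μ s := measureReal_nonneg

theorem monotoneOn_reciprocalTail (hfin : ∀ x, 0 < x → μ (Ici x) ≠ ∞) :
    MonotoneOn (reciprocalTail μ) (Ioi 0) := fun _ hs _ ht hst ↦
  measureReal_mono (Ici_subset_Ici.2 (inv_anti₀ hs hst)) (hfin _ (inv_pos.2 ht))

theorem one_sub_exp_neg_mul_mem_Icc {x : ℝ} (hρ : 0 ≤ ρ) (hx : 0 ≤ x) :
    1 - exp (-(ρ * x)) ∈ Icc 0 1 := by
  have hexp : exp (-(ρ * x)) ≤ 1 := exp_le_one_iff.2 (neg_nonpos.2 (mul_nonneg hρ hx))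
  exact ⟨sub_nonneg.2 hexp, sub_le_self 1 (exp_pos _).le⟩

theorem ae_one_sub_exp_neg_mul_nonneg (hμ : ∀ᵐ x ∂μ, 0 ≤ x) (hρ : 0 ≤ ρ) :
    0 ≤ᵐ[μ] fun x ↦ 1 - exp (-(ρ * x)) :=
  hμ.mono fun _ hx ↦ (one_sub_exp_neg_mul_mem_Icc hρ hx).1

theorem lintegral_one_sub_exp_neg_mul (hμ : ∀ᵐ x ∂μ, 0 ≤ x) (hfin : ∀ x, 0 < x → μ (Ici x) ≠ ∞)
    (hρ : 0 < ρ) :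
    ∫⁻ x, ENNReal.ofReal (1 - exp (-(ρ * x))) ∂μ =
      ∫⁻ u in Ioi 0, ENNReal.ofReal (reciprocalTail μ (ρ / u) * exp (-u)) := by
  have hprimitive (y : ℝ) : ∫ u in (0 : ℝ)..y, exp (-u) = 1 - exp (-y) := by simp
  have hcake := lintegral_comp_eq_lintegral_meas_le_mul (f := (ρ * ·)) (g := fun u ↦ exp (-u)) μ
    (hμ.mono fun _ hx ↦ mul_nonneg hρ.le hx) (by fun_prop)
    (fun _ _ ↦ Continuous.intervalIntegrable (by fun_prop) _ _) (.of_forall fun _ ↦ (exp_pos _).le)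
  simp only [hprimitive] at hcake
  rw [hcake]
  refine setLIntegral_congr_fun measurableSet_Ioi fun u (hu : 0 < u) ↦ ?_
  have hset : {x | u ≤ ρ * x} = Ici (ρ / u)⁻¹ := by
    ext x
    rw [inv_div, mem_Ici, div_le_iff₀' hρ, mem_ofPred_eq]
  rw [hset, reciprocalTail, ENNReal.ofReal_mul measureReal_nonneg,
    ofReal_measureReal (hfin _ (inv_pos.2 (div_pos hρ hu)))]

variable (hμ : ∀ᵐ x ∂μ, 0 ≤ x) (hfin : ∀ x, 0 < x → μ (Ici x) ≠ ∞) (hρ : 0 < ρ)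
include hμ hfin hρ

theorem integrable_one_sub_exp_neg_mul
    (hint : IntegrableOn (fun u ↦ reciprocalTail μ (ρ / u) * exp (-u)) (Ioi 0)) :
    Integrable (fun x ↦ 1 - exp (-(ρ * x))) μ := by
  rw [← lintegral_ofReal_ne_top_iff_integrable (by fun_prop)
    (ae_one_sub_exp_neg_mul_nonneg hμ hρ.le), lintegral_one_sub_exp_neg_mul hμ hfin hρ]
  refine (lintegral_ofReal_ne_top_iff_integrable hint.aestronglyMeasurable ?_).2 hint
  exact .of_forall fun u ↦ mul_nonneg (reciprocalTail_nonneg _) (exp_pos _).le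

theorem laplaceExponent_eq_integral_reciprocalTail :
    laplaceExponent μ ρ = ∫ u in Ioi 0, reciprocalTail μ (ρ / u) * exp (-u) := by
  have hmeas : AEStronglyMeasurable (fun u ↦ reciprocalTail μ (ρ / u) * exp (-u))
      (volume.restrict (Ioi 0)) :=
    ((aemeasurable_comp_const_div_of_monotoneOn (monotoneOn_reciprocalTail hfin) hρ).mul
      (by fun_prop)).aestronglyMeasurable
  rw [laplaceExponent, integral_eq_lintegral_of_nonneg_ae
    (ae_one_sub_exp_neg_mul_nonneg hμ hρ.le) (by fun_prop),
    lintegral_one_sub_exp_neg_mul hμ hfin hρ, integral_eq_lintegral_of_nonneg_ae _ hmeas]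
  exact .of_forall fun u ↦ mul_nonneg (reciprocalTail_nonneg _) (exp_pos _).le

end LaplaceExponent

theorem integrableOn_rpow_mul_exp_neg_Ioi {b : ℝ} (hb : b < 1) :
    IntegrableOn (fun u ↦ u ^ (-b) * exp (-u)) (Ioi 0) := by
  simpa only [sub_sub_cancel_left, mul_comm] using GammaIntegral_convergent (sub_pos.2 hb)

theorem integral_rpow_mul_exp_neg_Ioi {a : ℝ} (ha : a < 1) :
    ∫ u in Ioi 0, u ^ (-a) * exp (-u) = Gamma (1 - a) := by
  simp only [Gamma_eq_integral (sub_pos.2 ha), sub_sub_cancel_left, mul_comm]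

section Abelian

variable {μ : Measure ℝ} {α : ℝ} (hμ : ∀ᵐ x ∂μ, 0 ≤ x) (hfin : ∀ x, 0 < x → μ (Ici x) ≠ ∞)
  (hα0 : 0 ≤ α) (hα1 : α < 1) (hV : IsRegularlyVarying (reciprocalTail μ) α)
include hμ hfin hα0 hα1 hV

theorem eventually_integrable_one_sub_exp_neg_mul :
    ∀ᶠ ρ in atTop, Integrable (fun x ↦ 1 - exp (-(ρ * x))) μ := by
  obtain ⟨β, hαβ, hβ1⟩ := exists_between hα1
  filter_upwards [hV.eventually_integrableOn_comp_div_mul (monotoneOn_reciprocalTail hfin)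
    (fun s _ ↦ reciprocalTail_nonneg s) (hα0.trans hαβ.le) hαβ
    (by simpa using integrableOn_rpow_mul_exp_neg_Ioi zero_lt_one)
    (integrableOn_rpow_mul_exp_neg_Ioi hβ1), eventually_gt_atTop 0] with ρ hint hρ
  exact integrable_one_sub_exp_neg_mul hμ hfin hρ hint

theorem tendsto_laplaceExponent_div_reciprocalTail :
    Tendsto (fun ρ ↦ laplaceExponent μ ρ / reciprocalTail μ ρ) atTop (𝓝 (Gamma (1 - α))) := by
  obtain ⟨β, hαβ, hβ1⟩ := exists_between hα1
  rw [← integral_rpow_mul_exp_neg_Ioi hα1]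
  refine (hV.tendsto_integral_comp_div_mul_div (monotoneOn_reciprocalTail hfin)
    (fun s _ ↦ reciprocalTail_nonneg s) (hα0.trans hαβ.le) hαβ
    (by simpa using integrableOn_rpow_mul_exp_neg_Ioi zero_lt_one)
    (integrableOn_rpow_mul_exp_neg_Ioi hβ1)).congr' ?_
  filter_upwards [eventually_gt_atTop 0] with ρ hρ
  rw [laplaceExponent_eq_integral_reciprocalTail hμ hfin hρ]

end Abelian

/-- The integral operator `h ↦ ∫ (1 - e^{-ρx}) h(ρ(1-x)) μ(dx)` of the poissonized recursion. -/
noncomputable def poissonizedIntegral (μ : Measure ℝ) (h : ℝ → ℝ) (ρ : ℝ) : ℝ :=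
  ∫ x, (1 - exp (-(ρ * x))) * h (ρ * (1 - x)) ∂μ

section Sandwich

variable {μ : Measure ℝ} {h : ℝ → ℝ} {ρ : ℝ} (hμ : ∀ᵐ x ∂μ, 0 ≤ x) (hnonneg : ∀ t, 0 ≤ h t)
  (hmono : Monotone h) (hρ : 0 ≤ ρ) (hint : Integrable (fun x ↦ 1 - exp (-(ρ * x))) μ)
include hμ hnonneg hmono hρ hint

theorem integrable_one_sub_exp_neg_mul_mul :
    Integrable (fun x ↦ (1 - exp (-(ρ * x))) * h (ρ * (1 - x))) μ := by
  refine (hint.mul_const (h ρ)).mono'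
    (hint.aestronglyMeasurable.mul (hmono.measurable.comp (by fun_prop)).aestronglyMeasurable) ?_
  filter_upwards [hμ] with x hx
  have hexp := (one_sub_exp_neg_mul_mem_Icc hρ hx).1
  rw [norm_of_nonneg (mul_nonneg hexp (hnonneg _))]
  exact mul_le_mul_of_nonneg_left (hmono (mul_le_of_le_one_right hρ (sub_le_self 1 hx))) hexp

theorem poissonizedIntegral_le_laplaceExponent_mul :
    poissonizedIntegral μ h ρ ≤ laplaceExponent μ ρ * h ρ := by
  rw [poissonizedIntegral, laplaceExponent, ← integral_mul_const]
  refine integral_mono_ae (integrable_one_sub_exp_neg_mul_mul hμ hnonneg hmono hρ hint)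
    (hint.mul_const _) ?_
  filter_upwards [hμ] with x hx
  exact mul_le_mul_of_nonneg_left (hmono (mul_le_of_le_one_right hρ (sub_le_self 1 hx)))
    (one_sub_exp_neg_mul_mem_Icc hρ hx).1

theorem laplaceExponent_sub_mul_le_poissonizedIntegral {δ : ℝ} (hδ : μ (Ici δ) ≠ ∞) :
    (laplaceExponent μ ρ - μ.real (Ici δ)) * h ((1 - δ) * ρ) ≤ poissonizedIntegral μ h ρ := by
  have hind : Integrable ((Ici δ).indicator fun _ ↦ (1 : ℝ)) μ :=
    (integrable_indicator_iff measurableSet_Ici).2 (integrableOn_const hδ)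
  have hmass : ∫ x, (Ici δ).indicator (fun _ ↦ (1 : ℝ)) x ∂μ = μ.real (Ici δ) := by
    simp [integral_indicator_const _ measurableSet_Ici]
  rw [laplaceExponent, ← hmass, ← integral_sub hint hind, ← integral_mul_const]
  refine integral_mono_ae ((hint.sub hind).mul_const _)
    (integrable_one_sub_exp_neg_mul_mul hμ hnonneg hmono hρ hint) ?_
  filter_upwards [hμ] with x hx
  obtain ⟨hexp0, hexp1⟩ := one_sub_exp_neg_mul_mem_Icc hρ hx
  rcases le_or_gt δ x with hδx | hxδ
  · rw [indicator_of_mem (mem_Ici.2 hδx)]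
    exact (mul_nonpos_of_nonpos_of_nonneg (sub_nonpos.2 hexp1) (hnonneg _)).trans
      (mul_nonneg hexp0 (hnonneg _))
  · rw [indicator_of_notMem (notMem_Ici.2 hxδ), sub_zero, mul_comm (1 - δ)]
    gcongr
    exact hmono (by gcongr)

end Sandwich

section Asymptotics

variable {μ : Measure ℝ} {α γ : ℝ} {h : ℝ → ℝ} (hμ : ∀ᵐ x ∂μ, 0 ≤ x)
  (hfin : ∀ x, 0 < x → μ (Ici x) ≠ ∞) (hα0 : 0 < α) (hα1 : α < 1)
  (hV : IsRegularlyVarying (reciprocalTail μ) α) (hh : IsRegularlyVarying h γ)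
include hμ hfin hα0 hα1 hV hh

theorem tendsto_laplaceExponent_sub_mul_div {δ : ℝ} (hδ1 : δ < 1) :
    Tendsto (fun ρ ↦ (laplaceExponent μ ρ - μ.real (Ici δ)) * h ((1 - δ) * ρ) /
      (reciprocalTail μ ρ * h ρ)) atTop (𝓝 (Gamma (1 - α) * (1 - δ) ^ γ)) := by
  have htail : Tendsto (fun ρ ↦ μ.real (Ici δ) / reciprocalTail μ ρ) atTop (𝓝 0) :=
    tendsto_const_nhds.div_atTop (hV.tendsto_atTop hα0 (monotoneOn_reciprocalTail hfin))
  have hlim := ((tendsto_laplaceExponent_div_reciprocalTail hμ hfin hα0.le hα1 hV).sub htail).mul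
    (hh.tendsto_div (1 - δ) (sub_pos.2 hδ1))
  simpa only [sub_zero, ← sub_div, ← mul_div_mul_comm] using hlim

theorem tendsto_poissonizedIntegral_div_of_monotone (hnonneg : ∀ t, 0 ≤ h t) (hmono : Monotone h) :
    Tendsto (fun ρ ↦ poissonizedIntegral μ h ρ / (reciprocalTail μ ρ * h ρ)) atTop
      (𝓝 (Gamma (1 - α))) := by
  have hpos := (hV.mul hh).eventually_pos
  have hint := eventually_integrable_one_sub_exp_neg_mul hμ hfin hα0.le hα1 hV
  refine tendsto_order.2 ⟨fun l hl ↦ ?_, fun r hr ↦ ?_⟩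
  · have hδ : Tendsto (fun δ : ℝ ↦ Gamma (1 - α) * (1 - δ) ^ γ) (𝓝[>] 0) (𝓝 (Gamma (1 - α))) := by
      have hcont : ContinuousAt (fun δ : ℝ ↦ Gamma (1 - α) * (1 - δ) ^ γ) 0 :=
        continuousAt_const.mul (ContinuousAt.rpow_const (by fun_prop) (by simp))
      simpa using hcont.tendsto.mono_left nhdsWithin_le_nhds
    obtain ⟨δ, hlδ, hδ0, hδ1⟩ :=
      ((hδ.eventually_const_lt hl).and (Ioo_mem_nhdsGT zero_lt_one)).exists
    have hlower := tendsto_laplaceExponent_sub_mul_div hμ hfin hα0 hα1 hV hh hδ1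
    filter_upwards [hlower.eventually_const_lt hlδ, hpos, hint, eventually_ge_atTop 0]
      with ρ hlt hposρ hintρ hρ
    exact hlt.trans_le (div_le_div_of_nonneg_right (laplaceExponent_sub_mul_le_poissonizedIntegral
      hμ hnonneg hmono hρ hintρ (hfin δ hδ0)) hposρ.le)
  · have hupper := tendsto_laplaceExponent_div_reciprocalTail hμ hfin hα0.le hα1 hV
    filter_upwards [hupper.eventually_lt_const hr, hh.eventually_pos, hpos, hint,
      eventually_ge_atTop 0] with ρ hlt hhρ hposρ hintρ hρ
    rw [← mul_div_mul_right _ _ hhρ.ne'] at hlt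
    exact (div_le_div_of_nonneg_right (poissonizedIntegral_le_laplaceExponent_mul
      hμ hnonneg hmono hρ hintρ) hposρ.le).trans_lt hlt

end Asymptotics

section AtomAtOne

variable {μ : Measure ℝ} {α γ : ℝ} {h : ℝ → ℝ}

theorem monotone_indicator_Ioi (hnonneg : ∀ t, 0 < t → 0 ≤ h t) (hmono : MonotoneOn h (Ioi 0)) :
    Monotone ((Ioi 0).indicator h) := by
  intro s t hst
  rcases le_or_gt s 0 with hs | hs
  · rw [indicator_of_notMem (notMem_Ioi.2 hs)]
    exact indicator_nonneg hnonneg t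
  · rw [indicator_of_mem (mem_Ioi.2 hs), indicator_of_mem (mem_Ioi.2 (hs.trans_le hst))]
    exact hmono hs (hs.trans_le hst) hst

/-- An atom of `μ` at `1` evaluates `h` at `0`, where neither its sign nor its monotonicity is
controlled; splitting it off leaves a function that is nonnegative and monotone on all of `ℝ`. -/
theorem poissonizedIntegral_eq_indicator_add (hμ : ∀ᵐ x ∂μ, x ∈ Ioc 0 1) (hfin : μ {1} ≠ ∞) {ρ : ℝ}
    (hρ : 0 < ρ) (hint : Integrable
      (fun x ↦ (1 - exp (-(ρ * x))) * (Ioi 0).indicator h (ρ * (1 - x))) μ) :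
    poissonizedIntegral μ h ρ =
      poissonizedIntegral μ ((Ioi 0).indicator h) ρ + μ.real {1} * ((1 - exp (-ρ)) * h 0) := by
  have hatom : Integrable (({1} : Set ℝ).indicator fun _ ↦ (1 - exp (-ρ)) * h 0) μ :=
    (integrable_indicator_iff (measurableSet_singleton 1)).2 (integrableOn_const hfin)
  rw [← smul_eq_mul (μ.real {1}), ← integral_indicator_const _ (measurableSet_singleton 1),
    poissonizedIntegral, poissonizedIntegral, ← integral_add hint hatom]
  refine integral_congr_ae ?_
  filter_upwards [hμ] with x hx
  rcases hx.2.lt_or_eq with hx1 | rfl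
  · simp [hρ, hx1, hx1.ne]
  · simp

theorem tendsto_mul_atTop_of_monotoneOn {f : ℝ → ℝ} (hf : Tendsto f atTop atTop)
    (hmono : MonotoneOn h (Ioi 0)) (hpos : ∀ᶠ t in atTop, 0 < h t) :
    Tendsto (fun t ↦ f t * h t) atTop atTop := by
  obtain ⟨t₀, ht₀, hht₀⟩ := ((eventually_gt_atTop 0).and hpos).exists
  refine tendsto_atTop_mono' _ ?_ (hf.atTop_mul_const hht₀)
  filter_upwards [eventually_ge_atTop t₀, hf.eventually_ge_atTop 0] with t ht hft
  exact mul_le_mul_of_nonneg_left (hmono ht₀ (ht₀.trans_le ht) ht) hft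

theorem tendsto_poissonizedIntegral_div (hμ : ∀ᵐ x ∂μ, x ∈ Ioc 0 1)
    (hfin : ∀ x, 0 < x → μ (Ici x) ≠ ∞) (hα0 : 0 < α) (hα1 : α < 1)
    (hV : IsRegularlyVarying (reciprocalTail μ) α) (hnonneg : ∀ t, 0 < t → 0 ≤ h t)
    (hmono : MonotoneOn h (Ioi 0)) (hh : IsRegularlyVarying h γ) :
    Tendsto (fun ρ ↦ poissonizedIntegral μ h ρ / (reciprocalTail μ ρ * h ρ)) atTop
      (𝓝 (Gamma (1 - α))) := by
  have hμ0 : ∀ᵐ x ∂μ, 0 ≤ x := hμ.mono fun _ hx ↦ hx.1.le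
  have hh_eq : (Ioi 0).indicator h =ᶠ[atTop] h :=
    (eventually_gt_atTop 0).mono fun _ ht ↦ indicator_of_mem ht h
  have hmono₀ := monotone_indicator_Ioi hnonneg hmono
  have hmain := tendsto_poissonizedIntegral_div_of_monotone hμ0 hfin hα0 hα1 hV
    (hh.congr' hh_eq) (indicator_nonneg hnonneg) hmono₀
  have hatom : Tendsto (fun ρ ↦ μ.real {1} * ((1 - exp (-ρ)) * h 0) / (reciprocalTail μ ρ * h ρ))
      atTop (𝓝 0) := by
    refine Tendsto.div_atTop (a := μ.real {1} * ((1 - 0) * h 0)) ?_ <|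
      tendsto_mul_atTop_of_monotoneOn (hV.tendsto_atTop hα0 (monotoneOn_reciprocalTail hfin)) hmono
        hh.eventually_pos
    exact ((tendsto_exp_neg_atTop_nhds_zero.const_sub 1).mul_const _).const_mul _
  rw [← add_zero (Gamma (1 - α))]
  refine (hmain.add hatom).congr' ?_
  filter_upwards [hh_eq, eventually_integrable_one_sub_exp_neg_mul hμ0 hfin hα0.le hα1 hV,
    eventually_gt_atTop 0] with ρ hhρ hint hρ
  have hfin1 : μ {1} ≠ ∞ := measure_ne_top_of_subset (singleton_subset_iff.2 self_mem_Ici)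
    (hfin 1 one_pos)
  rw [poissonizedIntegral_eq_indicator_add hμ hfin1 hρ (integrable_one_sub_exp_neg_mul_mul hμ0
    (indicator_nonneg hnonneg) hmono₀ hρ.le hint), hhρ, add_div]

end AtomAtOne

theorem restrict_Ioc_zero_one_apply_Ici (ν : Measure ℝ) {x : ℝ} (hx : 0 < x) :
    ν.restrict (Ioc 0 1) (Ici x) = ν (Icc x 1) := by
  rw [Measure.restrict_apply measurableSet_Ici]
  congr 1
  ext y
  simp only [mem_inter_iff, mem_Ici, mem_Ioc, mem_Icc]
  exact ⟨fun hy ↦ ⟨hy.1, hy.2.2⟩, fun hy ↦ ⟨hy.1, hx.trans_le hy.1, hy.2⟩⟩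

theorem poissonized_integral_asymptotics_general {ν : Measure ℝ} {K G h : ℝ → ℝ} {α γ c : ℝ}
    (hα0 : 0 < α) (hα1 : α < 1) (hK : IsRegularlyVarying K α) (hG : IsRegularlyVarying G γ)
    (hfin : ∀ x, 0 < x → ν (Icc x 1) ≠ ∞)
    (hlim : Tendsto (fun x ↦ (ν (Icc x 1)).toReal / K x⁻¹) (𝓝[>] 0) (𝓝 1)) (hc : 0 < c)
    (hnonneg : ∀ ρ, 0 < ρ → 0 ≤ h ρ) (hmono : MonotoneOn h (Ioi 0))
    (hlimh : Tendsto (fun ρ ↦ h ρ / G ρ) atTop (𝓝 c)) :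
    Tendsto (fun ρ ↦ (∫ x in Ioc 0 1, (1 - exp (-(ρ * x))) * h (ρ * (1 - x)) ∂ν) / (K ρ * G ρ))
      atTop (𝓝 (Gamma (1 - α) * c)) := by
  set μ := ν.restrict (Ioc 0 1) with hμ_def
  have hVK : Tendsto (fun ρ ↦ reciprocalTail μ ρ / K ρ) atTop (𝓝 1) := by
    refine (hlim.comp tendsto_inv_atTop_nhdsGT_zero).congr' ?_
    filter_upwards [eventually_gt_atTop 0] with ρ hρ
    simp only [Function.comp_apply, inv_inv, reciprocalTail, measureReal_def, hμ_def,
      restrict_Ioc_zero_one_apply_Ici ν (inv_pos.2 hρ)]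
  have hV := hK.of_tendsto_div one_pos hVK
  have hh := hG.of_tendsto_div hc hlimh
  have hJ := tendsto_poissonizedIntegral_div (ae_restrict_mem measurableSet_Ioc)
    (fun x hx ↦ (restrict_Ioc_zero_one_apply_Ici ν hx).trans_ne (hfin x hx)) hα0 hα1 hV
    hnonneg hmono hh
  have hJK := hJ.mul (hVK.mul hlimh)
  rw [one_mul] at hJK
  refine hJK.congr' ?_
  filter_upwards [(hV.mul hh).eventually_pos] with ρ hpos
  rw [← mul_div_mul_comm, div_mul_div_cancel₀ hpos.ne', poissonizedIntegral]

/-- Induction-step asymptotics for the poissonized recursion: if `ℓ` is slowly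
varying at `∞`, `0 < α < 1`, `ν̃` has finite tails with
`ν̃([x,1]) x^α / ℓ(1/x) → 1` as `x ↓ 0`, and `h` is nondecreasing nonnegative with
`h(ρ)/(ρ^α ℓ(ρ))^{m-1} → c > 0`, then
`∫₀¹ (1-e^{-ρx}) h(ρ(1-x)) ν̃(dx) / (ρ^α ℓ(ρ))^m → Γ(1-α) c`. -/
theorem poissonized_integral_asymptotics (ℓ : ℝ → ℝ)
    (hℓpos : ∀ t : ℝ, 0 < t → 0 < ℓ t)
    (hℓsv : ∀ c : ℝ, 0 < c → Tendsto (fun t : ℝ => ℓ (c * t) / ℓ t) atTop (nhds 1))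
    (α : ℝ) (hα0 : 0 < α) (hα1 : α < 1)
    (ν : Measure ℝ) (hsupp : ν (Set.Ioc (0 : ℝ) 1)ᶜ = 0)
    (hfin : ∀ x : ℝ, 0 < x → ν (Set.Icc x 1) ≠ ⊤)
    (hlim : Tendsto (fun x : ℝ => (ν (Set.Icc x 1)).toReal * x ^ α / ℓ (1 / x))
      (nhdsWithin 0 (Set.Ioi 0)) (nhds 1))
    (m : ℕ) (hm : 1 ≤ m) (c : ℝ) (hc : 0 < c)
    (h : ℝ → ℝ)
    (hnonneg : ∀ ρ : ℝ, 0 < ρ → 0 ≤ h ρ)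
    (hmono : MonotoneOn h (Set.Ioi (0 : ℝ)))
    (hlimh : Tendsto (fun ρ : ℝ => h ρ / (ρ ^ α * ℓ ρ) ^ (m - 1)) atTop (nhds c)) :
    Tendsto (fun ρ : ℝ =>
        (∫ x in Set.Ioc (0 : ℝ) 1, (1 - Real.exp (-(ρ * x))) * h (ρ * (1 - x)) ∂ν) /
          (ρ ^ α * ℓ ρ) ^ m)
      atTop (nhds (Real.Gamma (1 - α) * c)) := by
  have hℓ : IsRegularlyVarying ℓ 0 :=
    ⟨(eventually_gt_atTop 0).mono hℓpos, fun c hc ↦ by simpa only [rpow_zero] using hℓsv c hc⟩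
  have hK : IsRegularlyVarying (fun ρ ↦ ρ ^ α * ℓ ρ) α := by
    simpa only [add_zero] using (isRegularlyVarying_rpow α).mul hℓ
  have htail : Tendsto (fun x ↦ (ν (Icc x 1)).toReal / (x⁻¹ ^ α * ℓ x⁻¹)) (𝓝[>] 0) (𝓝 1) := by
    refine hlim.congr' ?_
    filter_upwards [self_mem_nhdsWithin] with x (hx : 0 < x)
    rw [one_div, inv_rpow hx.le, div_mul_eq_div_div, div_inv_eq_mul]
  simpa only [mul_pow_sub_one (Nat.one_le_iff_ne_zero.1 hm)] using
    poissonized_integral_asymptotics_general hα0 hα1 hK (hK.pow (m - 1)) hfin htail hc hnonneg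
      hmono hlimh
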